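/- Let n ≥ 2 be an integer, let γ ⊆ {1,…,n} have cardinality k with 1 ≤ k ≤ n−1, and let 0 < σ²_min < σ²_max. For c ∈ ℝⁿ whose maximum likelihood estimates σ̂_I² = S_γ(c)/k and σ̂_N² = (S(c) − S_γ(c))/(n−k) both lie in [σ²_min, σ²_max], the normalized maximum likelihood density f_nml(c) — defined as the maximized likelihood Π_{i∈γ} φ(c_i; 0, σ̂_I²) Π_{i∉γ} φ(c_i; 0, σ̂_N²) divided by its integral over the region R = {c′ ∈ ℝⁿ : σ²_min ≤ S_γ(c′)/k ≤ σ²_max, σ²_min ≤ (S(c′) − S_γ(c′))/(n−k) ≤ σ²_max} — equals f_nml(c) = Γ(k/2) Γ((n−k)/2) / (π^{n/2} · S_γ(c)^{k/2} · (S(c) − S_γ(c))^{(n−k)/2}) · (ln(σ²_max/σ²_min))^{−2}. -/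

import Mathlib

open MeasureTheory Real Finset

/-- `Sg γ c = ∑_{i ∈ γ} c_i²`. -/
noncomputable def Sg {n : ℕ} (γ : Finset (Fin n)) (c : Fin n → ℝ) : ℝ :=
  ∑ i ∈ γ, (c i) ^ 2

/-- `Stot c = ∑_{i=1}^n c_i²`. -/
noncomputable def Stot {n : ℕ} (c : Fin n → ℝ) : ℝ :=
  ∑ i, (c i) ^ 2

/-- Centered Gaussian density `φ(x; 0, σ²) = (2πσ²)^{-1/2} exp(-x²/(2σ²))`. -/
noncomputable def gauss (x σ2 : ℝ) : ℝ :=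
  (2 * Real.pi * σ2) ^ (-(1 : ℝ) / 2) * Real.exp (-(x ^ 2) / (2 * σ2))

/-- The maximized likelihood of `c` under the extended model with retained set `γ`. -/
noncomputable def maxLik {n : ℕ} (γ : Finset (Fin n)) (c : Fin n → ℝ) : ℝ :=
  (∏ i ∈ γ, gauss (c i) (Sg γ c / γ.card)) *
    ∏ i ∈ γᶜ, gauss (c i) ((Stot c - Sg γ c) / ((n : ℝ) - γ.card))

noncomputable def hfun (m : ℕ) (a b s : ℝ) : ℝ :=
  open Classical in if a ≤ s / m ∧ s / m ≤ b then s ^ (-(m : ℝ) / 2) else 0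

lemma radial_1d (m : ℕ) (hm : 1 ≤ m) (a b : ℝ) (ha : 0 < a) (hab : a < b) :
    ∫ y in Set.Ioi (0 : ℝ), y ^ (m - 1) • hfun m a b (y ^ 2) = Real.log (b / a) / 2 := by
  have hm' : (0 : ℝ) < m := by exact_mod_cast hm
  have hb : 0 < b := ha.trans hab
  have h1 : Set.EqOn (fun y : ℝ => y ^ (m - 1) • hfun m a b (y ^ 2))
      (Set.indicator (Set.Icc (√(m * a)) (√(m * b))) (fun y => y⁻¹)) (Set.Ioi 0) := by
    intro y hy
    have hy : 0 < y := hy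
    have hiff : y ∈ Set.Icc (√(m * a)) (√(m * b)) ↔ a ≤ y ^ 2 / m ∧ y ^ 2 / m ≤ b := by
      rw [Set.mem_Icc, Real.sqrt_le_left hy.le, Real.le_sqrt' hy, le_div_iff₀ hm', div_le_iff₀ hm',
        mul_comm a, mul_comm b]
    simp only [hfun, Set.indicator, hiff]
    split_ifs with h
    · rw [smul_eq_mul, ← Real.rpow_natCast y 2, ← Real.rpow_mul hy.le, ← Real.rpow_natCast,
        ← Real.rpow_add hy, ← Real.rpow_neg_one, Nat.cast_sub hm]
      congr 1
      push_cast
      ring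
    · simp
  rw [setIntegral_congr_fun measurableSet_Ioi h1, setIntegral_indicator measurableSet_Icc]
  have hsa : 0 < √(m * a) := Real.sqrt_pos.2 (by positivity)
  have hsb : 0 < √(m * b) := Real.sqrt_pos.2 (by positivity)
  have : Set.Ioi (0 : ℝ) ∩ Set.Icc (√(m * a)) (√(m * b)) = Set.Icc (√(m * a)) (√(m * b)) := by
    apply Set.inter_eq_right.2
    intro y hy
    exact lt_of_lt_of_le hsa hy.1
  rw [this, integral_Icc_eq_integral_Ioc, ← intervalIntegral.integral_of_le
    (Real.sqrt_le_sqrt (by gcongr)), integral_inv_of_pos hsa hsb, ← Real.sqrt_div (by positivity),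
    Real.log_sqrt (by positivity), mul_div_mul_left _ _ hm'.ne']

lemma radial (ι : Type*) [Fintype ι] [Nonempty ι] (m : ℕ) (hm : Fintype.card ι = m)
    (a b : ℝ) (ha : 0 < a) (hab : a < b) :
    ∫ x : ι → ℝ, hfun m a b (∑ i, (x i) ^ 2)
      = π ^ ((m : ℝ) / 2) / Real.Gamma ((m : ℝ) / 2) * Real.log (b / a) := by
  have hm1 : 1 ≤ m := hm ▸ Fintype.card_pos
  have hm' : (0 : ℝ) < m := by exact_mod_cast hm1
  have h2 : ∫ x : ι → ℝ, hfun m a b (∑ i, (x i) ^ 2)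
      = ∫ x : EuclideanSpace ℝ ι, hfun m a b (‖x‖ ^ 2) := by
    rw [← (EuclideanSpace.volume_preserving_symm_measurableEquiv_toLp ι).symm.integral_comp
      (MeasurableEquiv.measurableEmbedding _)]
    congr 1
    ext x
    rw [EuclideanSpace.norm_sq_eq]
    simp
  rw [h2, MeasureTheory.integral_fun_norm_addHaar volume (fun r => hfun m a b (r ^ 2)), finrank_euclideanSpace, hm,
    radial_1d m hm1 a b ha hab, Measure.real, EuclideanSpace.volume_ball, hm]
  have hG : 0 < Real.Gamma ((m : ℝ) / 2) := Real.Gamma_pos_of_pos (by positivity)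
  rw [Real.Gamma_add_one (by positivity), Real.sqrt_eq_rpow, ← Real.rpow_natCast, ← Real.rpow_mul pi_pos.le]
  simp only [ENNReal.ofReal_one, one_pow, one_mul, smul_eq_mul, nsmul_eq_mul]
  rw [ENNReal.toReal_ofReal (by positivity), show 1 / 2 * (m : ℝ) = m / 2 by ring]
  field_simp

lemma prod_gauss {n : ℕ} (s : Finset (Fin n)) (c : Fin n → ℝ) (m : ℝ) (hm : (s.card : ℝ) = m)
    (t : ℝ) (ht : ∑ i ∈ s, (c i) ^ 2 = t) (hpos : 0 < t) (hm0 : 0 < m) :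
    ∏ i ∈ s, gauss (c i) (t / m)
      = (2 * π / m) ^ (-m / 2) * Real.exp (-m / 2) * t ^ (-m / 2) := by
  simp only [gauss]
  rw [Finset.prod_mul_distrib, Finset.prod_const, ← Real.exp_sum, ← Finset.sum_div,
    Finset.sum_neg_distrib, ht, ← Real.rpow_natCast, ← Real.rpow_mul (by positivity), hm,
    show 2 * π * (t / m) = 2 * π / m * t by ring, Real.mul_rpow (by positivity) hpos.le,
    show -1 / 2 * m = -m / 2 by ring, show -t / (2 * (t / m)) = -m / 2 by field_simp]
  ring

lemma Stot_sub {n : ℕ} (γ : Finset (Fin n)) (c : Fin n → ℝ) :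
    Stot c - Sg γ c = ∑ i ∈ γᶜ, (c i) ^ 2 := by
  rw [Stot, Sg, ← Finset.sum_add_sum_compl γ]; ring

theorem stmt_9 (n k : ℕ) (hn : 2 ≤ n) (γ : Finset (Fin n)) (hγ : γ.card = k)
    (hk1 : 1 ≤ k) (hk2 : k ≤ n - 1) (σmin σmax : ℝ) (h0 : 0 < σmin) (hσ : σmin < σmax)
    (c : Fin n → ℝ)
    (hI : Sg γ c / k ∈ Set.Icc σmin σmax)
    (hN : (Stot c - Sg γ c) / ((n : ℝ) - k) ∈ Set.Icc σmin σmax) :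
    maxLik γ c /
      (∫ c' in {c' : Fin n → ℝ |
          σmin ≤ Sg γ c' / k ∧ Sg γ c' / k ≤ σmax ∧
          σmin ≤ (Stot c' - Sg γ c') / ((n : ℝ) - k) ∧
          (Stot c' - Sg γ c') / ((n : ℝ) - k) ≤ σmax},
        maxLik γ c')
    = Real.Gamma ((k : ℝ) / 2) * Real.Gamma (((n : ℝ) - k) / 2) /
        (Real.pi ^ ((n : ℝ) / 2) * (Sg γ c) ^ ((k : ℝ) / 2) *
          (Stot c - Sg γ c) ^ (((n : ℝ) - k) / 2)) *
        ((Real.log (σmax / σmin)) ^ 2)⁻¹ := by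
  have hkn : k < n := by omega
  have hkp : (0 : ℝ) < k := by exact_mod_cast hk1
  have hjp : (0 : ℝ) < (n : ℝ) - k := by
    have : (k : ℝ) < n := by exact_mod_cast hkn
    linarith
  have hcast : ((n - k : ℕ) : ℝ) = (n : ℝ) - k := Nat.cast_sub hkn.le
  have hcc : ((γᶜ.card : ℕ) : ℝ) = (n : ℝ) - k := by
    rw [Finset.card_compl, Fintype.card_fin, hγ, hcast]
  obtain ⟨K, hK⟩ : ∃ K : ℝ, K = ((2 * π / k) ^ (-(k : ℝ) / 2) * Real.exp (-(k : ℝ) / 2)) *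
    ((2 * π / ((n : ℝ) - k)) ^ (-((n : ℝ) - k) / 2) * Real.exp (-((n : ℝ) - k) / 2)) := ⟨_, rfl⟩
  have hKpos : 0 < K := by rw [hK]; positivity
  have hml : ∀ c : Fin n → ℝ, σmin ≤ Sg γ c / k → σmin ≤ (Stot c - Sg γ c) / ((n : ℝ) - k) →
      0 < Sg γ c ∧ 0 < Stot c - Sg γ c ∧ maxLik γ c = K * ((Sg γ c) ^ (-(k : ℝ) / 2) *
        (Stot c - Sg γ c) ^ (-((n : ℝ) - k) / 2)) := by
    intro c h1 h2
    have p1 : 0 < Sg γ c := by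
      have := h0.trans_le h1
      rwa [div_pos_iff_of_pos_right hkp] at this
    have p2 : 0 < Stot c - Sg γ c := by
      have := h0.trans_le h2
      rwa [div_pos_iff_of_pos_right hjp] at this
    refine ⟨p1, p2, ?_⟩
    rw [maxLik, hγ, prod_gauss γ c k (by rw [hγ]) (Sg γ c) rfl p1 hkp,
      prod_gauss γᶜ c ((n : ℝ) - k) hcc _ (Stot_sub γ c).symm p2 hjp, hK]
    ring
  have hint : (∫ c' in {c' : Fin n → ℝ |
          σmin ≤ Sg γ c' / k ∧ Sg γ c' / k ≤ σmax ∧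
          σmin ≤ (Stot c' - Sg γ c') / ((n : ℝ) - k) ∧
          (Stot c' - Sg γ c') / ((n : ℝ) - k) ≤ σmax},
        maxLik γ c') = K * ((π ^ ((k : ℝ) / 2) / Real.Gamma ((k : ℝ) / 2) * Real.log (σmax / σmin)) *
         (π ^ (((n : ℝ) - k) / 2) / Real.Gamma (((n : ℝ) - k) / 2) * Real.log (σmax / σmin))) := by
    have hmeas1 : Measurable (fun c : Fin n → ℝ => Sg γ c) := by unfold Sg; fun_prop
    have hmeas2 : Measurable (fun c : Fin n → ℝ => Stot c) := by unfold Stot; fun_prop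
    have hms : MeasurableSet {c' : Fin n → ℝ |
          σmin ≤ Sg γ c' / k ∧ Sg γ c' / k ≤ σmax ∧
          σmin ≤ (Stot c' - Sg γ c') / ((n : ℝ) - k) ∧
          (Stot c' - Sg γ c') / ((n : ℝ) - k) ≤ σmax} := by
      have m1 := hmeas1.div_const (k : ℝ)
      have m2 := (hmeas2.sub hmeas1).div_const ((n : ℝ) - k)
      exact (measurableSet_le measurable_const m1).inter ((measurableSet_le m1 measurable_const).inter
        ((measurableSet_le measurable_const m2).inter (measurableSet_le m2 measurable_const)))
    rw [← integral_indicator hms]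
    have e1 : ∀ c' : Fin n → ℝ, Set.indicator {c' : Fin n → ℝ |
          σmin ≤ Sg γ c' / k ∧ Sg γ c' / k ≤ σmax ∧
          σmin ≤ (Stot c' - Sg γ c') / ((n : ℝ) - k) ∧
          (Stot c' - Sg γ c') / ((n : ℝ) - k) ≤ σmax} (fun c' => maxLik γ c') c'
        = K * (hfun k σmin σmax (Sg γ c') * hfun (n - k) σmin σmax (Stot c' - Sg γ c')) := by
      intro c'
      simp only [Set.indicator, Set.mem_ofPred_eq, hfun, hcast]
      split_ifs with h h2 h3 h3 h4 h5
      · exact (hml c' h.1 h.2.2.1).2.2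
      all_goals first | (exfalso; tauto) | simp
    simp_rw [e1]
    rw [integral_const_mul]
    congr 1
    have e2 : ∀ c' : Fin n → ℝ, hfun k σmin σmax (Sg γ c') * hfun (n - k) σmin σmax (Stot c' - Sg γ c')
        = (fun z : ({i // i ∈ γ} → ℝ) × ({i // ¬ i ∈ γ} → ℝ) =>
            hfun k σmin σmax (∑ i, (z.1 i) ^ 2) * hfun (n - k) σmin σmax (∑ i, (z.2 i) ^ 2))
          (MeasurableEquiv.piEquivPiSubtypeProd (fun _ : Fin n => ℝ) (fun i => i ∈ γ) c') := by
      intro c'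
      rw [Stot_sub, Sg]
      simp only [MeasurableEquiv.piEquivPiSubtypeProd_apply]
      congr 2
      · exact (Finset.sum_subtype γ (by simp) (fun i => c' i ^ 2))
      · exact (Finset.sum_subtype γᶜ (by simp) (fun i => c' i ^ 2))
    refine (integral_congr_ae (Filter.Eventually.of_forall e2)).trans
      (((volume_preserving_piEquivPiSubtypeProd (fun _ : Fin n => ℝ) (fun i => i ∈ γ)).integral_comp
      (MeasurableEquiv.measurableEmbedding _)
        (fun z : ({i // i ∈ γ} → ℝ) × ({i // ¬ i ∈ γ} → ℝ) =>
            hfun k σmin σmax (∑ i, (z.1 i) ^ 2) * hfun (n - k) σmin σmax (∑ i, (z.2 i) ^ 2))).trans ?_)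
    rw [Measure.volume_eq_prod, integral_prod_mul
      (fun x : {i // i ∈ γ} → ℝ => hfun k σmin σmax (∑ i, (x i) ^ 2))
      (fun x : {i // ¬ i ∈ γ} → ℝ => hfun (n - k) σmin σmax (∑ i, (x i) ^ 2))]
    have c1 : Fintype.card {i // i ∈ γ} = k := by simp [hγ]
    have c2 : Fintype.card {i // ¬ i ∈ γ} = n - k := by
      rw [Fintype.card_subtype_compl]; simp [hγ]
    have : Nonempty {i // i ∈ γ} := Fintype.card_pos_iff.1 (by omega)
    have : Nonempty {i // ¬ i ∈ γ} := Fintype.card_pos_iff.1 (by omega)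
    have r1 := radial _ k c1 _ _ h0 hσ
    have r2 := radial _ (n - k) c2 _ _ h0 hσ
    rw [hcast] at r2
    rw [← r1, ← r2]
    congr!
  obtain ⟨p1, p2, hc⟩ := hml c hI.1 hN.1
  have hlog : 0 < Real.log (σmax / σmin) := Real.log_pos ((one_lt_div h0).2 hσ)
  have g1 : 0 < Real.Gamma ((k : ℝ) / 2) := Real.Gamma_pos_of_pos (by positivity)
  have g2 : 0 < Real.Gamma (((n : ℝ) - k) / 2) := Real.Gamma_pos_of_pos (by positivity)
  rw [hint, hc, neg_div, neg_div, Real.rpow_neg p1.le, Real.rpow_neg p2.le,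
    show (n : ℝ) / 2 = k / 2 + ((n : ℝ) - k) / 2 by ring, Real.rpow_add pi_pos]
  have q1 := Real.rpow_pos_of_pos p1 ((k : ℝ) / 2)
  have q2 := Real.rpow_pos_of_pos p2 (((n : ℝ) - k) / 2)
  have q3 := Real.rpow_pos_of_pos pi_pos ((k : ℝ) / 2)
  have q4 := Real.rpow_pos_of_pos pi_pos (((n : ℝ) - k) / 2)
  generalize (Sg γ c) ^ ((k : ℝ) / 2) = A1 at *
  generalize (Stot c - Sg γ c) ^ (((n : ℝ) - k) / 2) = A2 at *
  generalize π ^ ((k : ℝ) / 2) = A3 at *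
  generalize π ^ (((n : ℝ) - k) / 2) = A4 at *
  generalize Real.Gamma ((k : ℝ) / 2) = A5 at *
  generalize Real.Gamma (((n : ℝ) - k) / 2) = A6 at *
  generalize Real.log (σmax / σmin) = A7 at *
  field_simp
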